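/- arXiv:2605.09892 — 4 statements merged into one kernel-verified Lean document; each statement's English description precedes it below -/
import Mathlib

section
/- (Proposition 2 of the paper, closed-form conditional outage.) Let m > 0, q > 0 and ν > 0. Then q · ∫₀¹ γ(m, mν/u) · u^(q−1) du = γ(m, mν) + (mν)^q · Γ(m−q, mν), where γ(a,x) = ∫₀ˣ t^(a−1) e^(−t) dt is the lower incomplete gamma function and Γ(a,x) = ∫ₓ^∞ t^(a−1) e^(−t) dt is the generalized upper incomplete gamma function. Equivalently, dividing by Γ(m), the conditional outage probability P_out = (q/Γ(m)) ∫₀¹ γ(m, mν/u) u^(q−1) du equals [γ(m, mν) + (mν)^q Γ(m−q, mν)] / Γ(m). -/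
open MeasureTheory Set Real

/-- The lower incomplete gamma function `γ(a, x) = ∫₀ˣ t^(a-1) e^(-t) dt`. -/
noncomputable def lowerIncGamma (a x : ℝ) : ℝ :=
  ∫ t in (0:ℝ)..x, t ^ (a - 1) * Real.exp (-t)

/-- The generalized upper incomplete gamma function
`Γ(a, x) = ∫ₓ^∞ t^(a-1) e^(-t) dt`, finite for all real `a` whenever `x > 0`. -/
noncomputable def upperIncGamma (a x : ℝ) : ℝ :=
  ∫ t in Ioi x, t ^ (a - 1) * Real.exp (-t)

/-- Proposition 2 (closed-form conditional outage):
`q ∫₀¹ γ(m, mν/u) u^(q-1) du = γ(m, mν) + (mν)^q Γ(m-q, mν)`. -/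
theorem conditional_outage_closed_form (m q ν : ℝ) (hm : 0 < m) (hq : 0 < q) (hν : 0 < ν) :
    q * ∫ u in Ioc (0:ℝ) 1, lowerIncGamma m (m * ν / u) * u ^ (q - 1) =
      lowerIncGamma m (m * ν) + (m * ν) ^ q * upperIncGamma (m - q) (m * ν) := by
  have hc : 0 < m * ν := mul_pos hm hν
  generalize m * ν = c at hc
  have hf : IntegrableOn (fun t : ℝ => t ^ (m - 1) * Real.exp (-t)) (Ioi 0) := by
    refine (Real.GammaIntegral_convergent hm).congr_fun (fun x _ => mul_comm _ _) measurableSet_Ioi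
  have hg : IntegrableOn (fun u : ℝ => u ^ (q - 1)) (Ioc 0 1) := by
    have := intervalIntegral.intervalIntegrable_rpow' (a := 0) (b := 1) (r := q - 1) (by linarith)
    rwa [intervalIntegrable_iff_integrableOn_Ioc_of_le zero_le_one] at this
  have hgv : ∀ b : ℝ, 0 ≤ b → ∫ u in Ioc (0:ℝ) b, u ^ (q - 1) = b ^ q / q := by
    intro b hb
    rw [← intervalIntegral.integral_of_le hb, integral_rpow (Or.inl (by linarith))]
    simp [Real.zero_rpow hq.ne']
  have hS : MeasurableSet {p : ℝ × ℝ | p.1 * p.2 ≤ c} :=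
    measurableSet_le (by fun_prop) (by fun_prop)
  have hF : Integrable ({p : ℝ × ℝ | p.1 * p.2 ≤ c}.indicator
      (fun p : ℝ × ℝ => p.1 ^ (q - 1) * (p.2 ^ (m - 1) * Real.exp (-p.2))))
      ((volume.restrict (Ioc (0:ℝ) 1)).prod (volume.restrict (Ioi (0:ℝ)))) :=
    (Integrable.mul_prod hg hf).indicator hS
  have hswap := integral_integral_swap (f := fun u t => ({p : ℝ × ℝ | p.1 * p.2 ≤ c}.indicator
      (fun p : ℝ × ℝ => p.1 ^ (q - 1) * (p.2 ^ (m - 1) * Real.exp (-p.2)))) (u, t)) hF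
  have hL : ∫ u in Ioc (0:ℝ) 1, lowerIncGamma m (c / u) * u ^ (q - 1) =
      ∫ u in Ioc (0:ℝ) 1, ∫ t in Ioi (0:ℝ), ({p : ℝ × ℝ | p.1 * p.2 ≤ c}.indicator
      (fun p : ℝ × ℝ => p.1 ^ (q - 1) * (p.2 ^ (m - 1) * Real.exp (-p.2)))) (u, t) := by
    refine setIntegral_congr_fun measurableSet_Ioc (fun u hu => ?_)
    have hu0 : 0 < u := hu.1
    have h1 : ∀ t : ℝ, ({p : ℝ × ℝ | p.1 * p.2 ≤ c}.indicator
      (fun p : ℝ × ℝ => p.1 ^ (q - 1) * (p.2 ^ (m - 1) * Real.exp (-p.2)))) (u, t) =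
        (Iic (c / u)).indicator (fun t => u ^ (q - 1) * (t ^ (m - 1) * Real.exp (-t))) t := by
      intro t
      simp only [indicator, mem_setOf_eq, mem_Iic, le_div_iff₀ hu0, mul_comm u t]
    simp only [h1]
    rw [setIntegral_indicator measurableSet_Iic, Ioi_inter_Iic, integral_const_mul,
      lowerIncGamma, intervalIntegral.integral_of_le (by positivity), mul_comm]
  have hR : ∀ t ∈ Ioi (0:ℝ), ∫ u in Ioc (0:ℝ) 1, ({p : ℝ × ℝ | p.1 * p.2 ≤ c}.indicator
      (fun p : ℝ × ℝ => p.1 ^ (q - 1) * (p.2 ^ (m - 1) * Real.exp (-p.2)))) (u, t) =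
      (min 1 (c / t)) ^ q / q * (t ^ (m - 1) * Real.exp (-t)) := by
    intro t ht
    have ht0 : 0 < t := ht
    have h1 : ∀ u : ℝ, ({p : ℝ × ℝ | p.1 * p.2 ≤ c}.indicator
      (fun p : ℝ × ℝ => p.1 ^ (q - 1) * (p.2 ^ (m - 1) * Real.exp (-p.2)))) (u, t) =
        (Iic (c / t)).indicator (fun u => u ^ (q - 1) * (t ^ (m - 1) * Real.exp (-t))) u := by
      intro u
      simp only [indicator, mem_setOf_eq, mem_Iic, le_div_iff₀ ht0]
    simp only [h1]
    rw [setIntegral_indicator measurableSet_Iic, Ioc_inter_Iic, integral_mul_const,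
      hgv _ (by positivity)]
  have hint : IntegrableOn (fun t : ℝ => (min 1 (c / t)) ^ q / q * (t ^ (m - 1) * Real.exp (-t)))
      (Ioi 0) := by
    refine IntegrableOn.congr_fun (f := fun t => ∫ u in Ioc (0:ℝ) 1,
      ({p : ℝ × ℝ | p.1 * p.2 ≤ c}.indicator
      (fun p : ℝ × ℝ => p.1 ^ (q - 1) * (p.2 ^ (m - 1) * Real.exp (-p.2)))) (u, t))
      ?_ hR measurableSet_Ioi
    exact hF.integral_prod_right
  rw [hL, hswap, setIntegral_congr_fun measurableSet_Ioi hR, ← Ioc_union_Ioi_eq_Ioi hc.le,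
    setIntegral_union (Ioc_disjoint_Ioi le_rfl) measurableSet_Ioi
      (hint.mono_set Ioc_subset_Ioi_self) (hint.mono_set (Ioi_subset_Ioi hc.le)),
    mul_add, lowerIncGamma, upperIncGamma, intervalIntegral.integral_of_le hc.le,
    ← integral_const_mul, ← integral_const_mul, ← integral_const_mul]
  congr 1
  · refine setIntegral_congr_fun measurableSet_Ioc (fun t ht => ?_)
    have : 1 ≤ c / t := by rw [le_div_iff₀ ht.1]; linarith [ht.2]
    simp only [min_eq_left this, Real.one_rpow]
    field_simp
  · refine setIntegral_congr_fun measurableSet_Ioi (fun t ht => ?_)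
    have ht0 : 0 < t := hc.trans ht
    have : c / t ≤ 1 := by rw [div_le_one ht0]; exact le_of_lt ht
    simp only [min_eq_right this]
    rw [Real.div_rpow hc.le ht0.le, show m - q - 1 = (m - 1) - q by ring, Real.rpow_sub ht0 (m-1) q]
    have := (Real.rpow_pos_of_pos ht0 q).ne'
    field_simp
end

section
/- Let α > 0 be real. Then, using the principal branch of the complex power, the quotient [Re((α + i·ξ)^(5/6)) − α^(5/6)] / ξ² tends to (5/72) · α^(−7/6) as ξ tends to 0 through nonzero values. -/
open Filter Real Topology

theorem aux_hasDerivAt (α : ℝ) (hα : 0 < α) (c : ℂ) (ξ : ℝ) :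
    HasDerivAt (fun ξ : ℝ => ((α : ℂ) + (ξ : ℂ) * Complex.I) ^ c)
      (c * ((α : ℂ) + (ξ : ℂ) * Complex.I) ^ (c - 1) * Complex.I) ξ := by
  have h1 : HasDerivAt (fun z : ℂ => (α : ℂ) + z * Complex.I) Complex.I (ξ : ℂ) := by
    simpa using ((hasDerivAt_id (ξ : ℂ)).mul_const Complex.I).const_add (α : ℂ)
  have h2 := h1.cpow_const (c := c) (Or.inl (by simpa using hα))
  exact h2.comp_ofReal

theorem aux_re (f : ℝ → ℂ) (f' : ℂ) (x : ℝ) (h : HasDerivAt f f' x) :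
    HasDerivAt (fun x => (f x).re) f'.re x := by
  exact (Complex.reCLM.hasFDerivAt (x := f x)).comp_hasDerivAt x h

/-- Limit form of Proposition 1:
`[Re((α + iξ)^(5/6)) - α^(5/6)] / ξ² → (5/72) α^(-7/6)` as `ξ → 0`, `ξ ≠ 0`
(principal branch of the complex power). -/
theorem re_cpow_quadratic_limit (α : ℝ) (hα : 0 < α) :
    Tendsto
      (fun ξ : ℝ =>
        ((((α : ℂ) + (ξ : ℂ) * Complex.I) ^ ((5 : ℂ) / 6)).re - α ^ ((5 : ℝ) / 6)) / ξ ^ 2)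
      (nhdsWithin 0 {0}ᶜ)
      (nhds ((5 / 72) * α ^ (-(7 : ℝ) / 6))) := by
  have hp : ∀ r : ℝ, (α : ℂ) ^ (r : ℂ) = ((α ^ r : ℝ) : ℂ) := fun r =>
    (Complex.ofReal_cpow hα.le r).symm
  have hd : ∀ ξ : ℝ, HasDerivAt
      (fun ξ : ℝ => (((α : ℂ) + (ξ : ℂ) * Complex.I) ^ ((5 : ℂ) / 6)).re - α ^ ((5 : ℝ) / 6))
      ((5 / 6 * ((α : ℂ) + (ξ : ℂ) * Complex.I) ^ ((5 : ℂ) / 6 - 1) * Complex.I).re) ξ :=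
    fun ξ => (aux_re _ _ _ (aux_hasDerivAt α hα _ ξ)).sub_const _
  refine HasDerivAt.lhopital_zero_nhdsNE (Eventually.of_forall hd)
    (g' := fun ξ => 2 * ξ) (Eventually.of_forall fun x => by simpa using hasDerivAt_pow 2 x)
    ?_ ?_ ?_ ?_
  · filter_upwards [self_mem_nhdsWithin] with x hx
    simpa using hx
  · have := (hd 0).continuousAt.tendsto
    have h5 := hp (5 / 6)
    push_cast at h5
    simp only [Complex.ofReal_zero, zero_mul, add_zero, h5, Complex.ofReal_re, sub_self] at this
    exact this.mono_left nhdsWithin_le_nhds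
  · have : Tendsto (fun x : ℝ => x ^ 2) (𝓝 0) (𝓝 (0 ^ 2)) := (continuous_pow 2).tendsto 0
    simpa using this.mono_left (nhdsWithin_le_nhds (s := {0}ᶜ))
  · have h := aux_re _ _ _ (((aux_hasDerivAt α hα ((5 : ℂ) / 6 - 1) 0).const_mul
      (5 / 6 : ℂ)).mul_const Complex.I)
    rw [hasDerivAt_iff_tendsto_slope] at h
    have h2 := h.const_mul (1 / 2 : ℝ)
    have h7 := hp (-7 / 6)
    have h1 := hp (-1 / 6)
    push_cast at h7 h1
    have e1 : (5 / 6 - 1 : ℂ) = -1 / 6 := by norm_num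
    have e2 : (-1 / 6 - 1 : ℂ) = -7 / 6 := by norm_num
    rw [e1] at h2 ⊢
    rw [e2] at h2
    refine (h2.congr fun x => ?_).trans_eq ?_
    · simp only [slope, vsub_eq_sub, smul_eq_mul, Complex.ofReal_zero, zero_mul, add_zero, h1,
        sub_zero]
      have : (5 / 6 * ((α ^ (-1 / 6 : ℝ) : ℝ) : ℂ) * Complex.I).re = 0 := by simp
      rw [this, sub_zero, div_eq_mul_inv _ (2 * x), mul_inv]
      ring
    · congr 1
      simp only [Complex.ofReal_zero, zero_mul, add_zero, h7]
      have : (5 / 6 * (-1 / 6 * ((α ^ (-7 / 6 : ℝ) : ℝ) : ℂ) * Complex.I) * Complex.I)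
        = ((5 / 36 * α ^ (-7 / 6 : ℝ) : ℝ) : ℂ) := by
        push_cast
        linear_combination (-5 / 36 * ((α ^ (-7 / 6 : ℝ) : ℝ) : ℂ)) * Complex.I_mul_I
      rw [this, Complex.ofReal_re]
      ring
end

section
/- Let m > 0, λ > 0, k > 0, ν > 0, and set q = λ/k. Let μₐ be the Gamma distribution on ℝ with shape m and rate m, and let μ_p be the pushforward of the exponential distribution with rate λ under the map x ↦ exp(−k·x). Then the product measure μₐ × μ_p assigns to the event {(x,u) : x·u < ν} the probability (1/Γ(m)) · [γ(m, m·ν) + (m·ν)^q · Γ(m−q, m·ν)], where γ(a,y) = ∫₀^y t^(a−1) e^(−t) dt is the lower incomplete gamma function and Γ(a,y) = ∫_y^∞ t^(a−1) e^(−t) dt is the generalized upper incomplete gamma function (with the convention that the probability is capped at 1, or equivalently assuming ν is such that the expression is ≤ 1; in fact the expression always lies in [0,1]). -/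
open MeasureTheory ProbabilityTheory Real Set

lemma expMeasure_Ioi_aux {l : ℝ} (hl : 0 < l) (c : ℝ) :
    expMeasure l (Ioi c) = ENNReal.ofReal (if 0 ≤ c then Real.exp (-(l * c)) else 1) := by
  have : IsProbabilityMeasure (expMeasure l) := isProbabilityMeasure_expMeasure hl
  have h1 := cdf_expMeasure_eq hl c
  rw [cdf_eq_real] at h1
  have h2 : (expMeasure l).real (Ioi c) = 1 - (expMeasure l).real (Iic c) := by
    rw [← compl_Iic, probReal_compl_eq_one_sub measurableSet_Iic]
  rw [← ofReal_measureReal, h2, h1]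
  congr 1
  split_ifs <;> ring

lemma map_section_aux {l k ν x : ℝ} (hl : 0 < l) (hk : 0 < k) (hν : 0 < ν) (hx : 0 < x) :
    (Measure.map (fun y : ℝ => Real.exp (-(k * y))) (expMeasure l)) {u | x * u < ν} =
      ENNReal.ofReal (if x ≤ ν then 1 else (ν / x) ^ (l / k)) := by
  rw [Measure.map_apply (by fun_prop) (measurableSet_lt (by fun_prop) (by fun_prop))]
  have : (fun y : ℝ => Real.exp (-(k * y))) ⁻¹' {u | x * u < ν}
      = Ioi (-(Real.log (ν / x)) / k) := by
    ext y
    simp only [mem_preimage, mem_ofPred_eq, mem_Ioi]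
    rw [div_lt_iff₀ hk, mul_comm x, ← lt_div_iff₀ hx, ← Real.lt_log_iff_exp_lt (by positivity)]
    constructor <;> intro h <;> linarith
  rw [this, expMeasure_Ioi_aux hl]
  congr 1
  rcases lt_trichotomy x ν with h | h | h
  · have h1 : 0 < Real.log (ν / x) := Real.log_pos (by rwa [one_lt_div hx])
    rw [if_neg, if_pos h.le]
    rw [not_le]
    exact div_neg_of_neg_of_pos (by linarith) hk
  · subst h
    simp [hx.ne']
  · have h1 : Real.log (ν / x) < 0 := Real.log_neg (by positivity) (by rwa [div_lt_one hx])
    rw [if_pos (div_nonneg (by linarith) hk.le), if_neg (not_le.2 h),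
      Real.rpow_def_of_pos (by positivity)]
    congr 1
    field_simp

lemma integrable_gammaPDFReal_aux {m : ℝ} (hm : 0 < m) : Integrable (gammaPDFReal m m) := by
  refine ⟨by fun_prop, ?_⟩
  rw [hasFiniteIntegral_iff_ofReal (ae_of_all _ (gammaPDFReal_nonneg hm hm))]
  have := lintegral_gammaPDF_eq_one hm hm
  unfold gammaPDF at this
  rw [this]
  simp

/-- Proposition 2 of the paper, in probabilistic form: if `hₐ` is unit-mean Gamma with
shape `m` and rate `m`, and `h_p = exp(-k·R)` with `R` exponential of rate `l`, independent
of `hₐ`, then with `q = l/k` the outage probability `Pr[hₐ · h_p < ν]` equals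
`(1/Γ(m)) [γ(m, mν) + (mν)^q Γ(m-q, mν)]`. -/
theorem outage_probability_closed_form (m l k ν : ℝ) (hm : 0 < m) (hl : 0 < l)
    (hk : 0 < k) (hν : 0 < ν) :
    ((gammaMeasure m m).prod
        (Measure.map (fun x : ℝ => Real.exp (-(k * x))) (expMeasure l)))
        {p : ℝ × ℝ | p.1 * p.2 < ν} =
      ENNReal.ofReal ((1 / Real.Gamma m) *
        (lowerIncGamma m (m * ν) +
          (m * ν) ^ (l / k) * upperIncGamma (m - l / k) (m * ν))) := by
  have : IsProbabilityMeasure (expMeasure l) := isProbabilityMeasure_expMeasure hl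
  have : IsProbabilityMeasure (gammaMeasure m m) := isProbabilityMeasure_gammaMeasure hm hm
  have : IsProbabilityMeasure (Measure.map (fun x : ℝ => Real.exp (-(k * x))) (expMeasure l)) :=
    Measure.isProbabilityMeasure_map (by fun_prop)
  have hS : MeasurableSet {p : ℝ × ℝ | p.1 * p.2 < ν} :=
    measurableSet_lt (by fun_prop) (by fun_prop)
  set F : ℝ → ℝ := fun x => if x ≤ ν then 1 else (ν / x) ^ (l / k) with hF
  have hFm : Measurable F := Measurable.ite measurableSet_Iic (by fun_prop) (by fun_prop)
  have hF0 : ∀ x, 0 ≤ F x := by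
    intro x
    simp only [hF]
    split_ifs with h
    · norm_num
    · have : 0 < x := by linarith
      positivity
  have hF1 : ∀ x, F x ≤ 1 := by
    intro x
    simp only [hF]
    split_ifs with h
    · norm_num
    · have hx : 0 < x := by linarith
      exact Real.rpow_le_one (by positivity) (by rw [div_le_one hx]; linarith) (by positivity)
  have hgi := integrable_gammaPDFReal_aux hm
  have hInt : Integrable (fun x => gammaPDFReal m m x * F x) := by
    refine hgi.mono (by fun_prop) (ae_of_all _ fun x => ?_)
    rw [norm_mul]
    refine mul_le_of_le_one_right (norm_nonneg _) ?_
    rw [Real.norm_of_nonneg (hF0 x)]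
    exact hF1 x
  rw [Measure.prod_apply hS, gammaMeasure, lintegral_withDensity_eq_lintegral_mul _
    (by unfold gammaPDF; fun_prop) (measurable_measure_prodMk_left hS)]
  have key : ∀ᵐ x : ℝ, (gammaPDF m m * fun x =>
      (Measure.map (fun x : ℝ => Real.exp (-(k * x))) (expMeasure l))
        (Prod.mk x ⁻¹' {p : ℝ × ℝ | p.1 * p.2 < ν})) x
        = ENNReal.ofReal (gammaPDFReal m m x * F x) := by
    filter_upwards [Measure.ae_ne volume (0 : ℝ)] with x hx
    rcases lt_or_gt_of_ne hx with h | h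
    · simp [gammaPDF_of_neg h, gammaPDFReal, not_le.2 h]
    · rw [ENNReal.ofReal_mul (gammaPDFReal_nonneg hm hm x)]
      simp only [Pi.mul_apply]
      congr 1
      exact map_section_aux hl hk hν h
  rw [lintegral_congr_ae key, ← ofReal_integral_eq_lintegral_ofReal hInt
    (ae_of_all _ fun x => mul_nonneg (gammaPDFReal_nonneg hm hm x) (hF0 x))]
  congr 1
  have e1 : ∫ x, gammaPDFReal m m x * F x = ∫ x in Ioi 0, gammaPDFReal m m x * F x := by
    rw [← integral_Ici_eq_integral_Ioi]
    symm
    apply setIntegral_eq_integral_of_forall_compl_eq_zero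
    intro x hx
    simp only [mem_Ici, not_le] at hx
    simp [gammaPDFReal, not_le.2 hx]
  rw [e1, ← Ioc_union_Ioi_eq_Ioi hν.le, setIntegral_union (Ioc_disjoint_Ioi le_rfl)
    measurableSet_Ioi hInt.integrableOn hInt.integrableOn, mul_add]
  have hG := Real.Gamma_pos_of_pos hm
  congr 1
  · have h1 : lowerIncGamma m (m * ν) = m * ∫ x in (0:ℝ)..ν,
        (m * x) ^ (m - 1) * Real.exp (-(m * x)) := by
      rw [intervalIntegral.integral_comp_mul_left (fun t => t ^ (m - 1) * Real.exp (-t)) hm.ne']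
      simp only [mul_zero, smul_eq_mul, lowerIncGamma]
      field_simp
    rw [h1, intervalIntegral.integral_of_le hν.le, ← integral_const_mul, ← integral_const_mul]
    refine setIntegral_congr_fun measurableSet_Ioc fun x hx => ?_
    have hx0 : 0 < x := hx.1
    simp only [hF, if_pos hx.2, gammaPDFReal, if_pos hx0.le]
    rw [Real.mul_rpow hm.le hx0.le, Real.rpow_sub hm, Real.rpow_one]
    field_simp
  · have h1 : upperIncGamma (m - l / k) (m * ν) = m * ∫ x in Ioi ν,
        (m * x) ^ (m - l / k - 1) * Real.exp (-(m * x)) := by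
      rw [integral_comp_mul_left_Ioi (fun t => t ^ (m - l / k - 1) * Real.exp (-t)) _ hm]
      simp only [smul_eq_mul, upperIncGamma]
      field_simp
    rw [h1, ← integral_const_mul, ← integral_const_mul, ← integral_const_mul]
    refine setIntegral_congr_fun measurableSet_Ioi fun x hx => ?_
    have hx1 : ν < x := hx
    have hx0 : 0 < x := hν.trans hx1
    simp only [hF, if_neg (not_le.2 hx1), gammaPDFReal, if_pos hx0.le]
    generalize l / k = q
    rw [Real.mul_rpow hm.le hx0.le, Real.mul_rpow hm.le hν.le, Real.div_rpow hν.le hx0.le,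
      Real.rpow_sub hm, Real.rpow_sub hm, Real.rpow_sub hx0, Real.rpow_sub hx0, Real.rpow_sub hx0,
      Real.rpow_one, Real.rpow_one]
    field_simp
end

section
/- Let m > 0, λ > 0, k > 0, ν > 0, and set q = λ/k. Let μₐ be the Gamma distribution on ℝ with shape m and rate m, and let μ_p be the pushforward of the exponential distribution with rate λ under the map x ↦ exp(−k·x). Then the product measure μₐ × μ_p assigns to the event {(x,u) : x·u < ν} the probability q · ∫₀¹ [γ(m, m·ν/u)/Γ(m)] · u^(q−1) du, where γ(a,y) = ∫₀^y t^(a−1) e^(−t) dt is the lower incomplete gamma function and Γ is the Gamma function. -/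
open MeasureTheory ProbabilityTheory Real Set

lemma gamma_Iio_aux (m y : ℝ) (hm : 0 < m) (hy : 0 < y) :
    gammaMeasure m m (Iio y) = ENNReal.ofReal (lowerIncGamma m (m * y) / Real.Gamma m) := by
  have hint : Integrable (gammaPDFReal m m) := by
    refine ⟨(measurable_gammaPDFReal m m).aestronglyMeasurable, ?_⟩
    rw [hasFiniteIntegral_iff_ofReal (ae_of_all _ (gammaPDFReal_nonneg hm hm))]
    have := lintegral_gammaPDF_eq_one hm hm
    unfold gammaPDF at this
    rw [this]
    exact ENNReal.one_lt_top
  rw [gammaMeasure, withDensity_apply _ measurableSet_Iio]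
  unfold gammaPDF
  rw [← ofReal_integral_eq_lintegral_ofReal hint.integrableOn
    (ae_of_all _ (gammaPDFReal_nonneg hm hm)), ← integral_Iic_eq_integral_Iio]
  congr 1
  have h0 : ∫ x in Iic (0:ℝ), gammaPDFReal m m x = 0 := by
    rw [integral_Iic_eq_integral_Iio]
    apply setIntegral_eq_zero_of_forall_eq_zero
    intro x hx
    simp only [gammaPDFReal, if_neg (not_le.mpr (mem_Iio.mp hx))]
  have h1 := intervalIntegral.integral_Iic_sub_Iic (a := 0) (b := y)
    (hint.integrableOn (s := Iic 0)) (hint.integrableOn (s := Iic y))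
  rw [h0, sub_zero] at h1
  rw [h1]
  have h2 : ∫ x in (0:ℝ)..y, gammaPDFReal m m x =
      ∫ x in (0:ℝ)..y, (m / Real.Gamma m) * ((m * x) ^ (m - 1) * Real.exp (-(m * x))) := by
    apply intervalIntegral.integral_congr
    intro x hx
    rw [uIcc_of_le hy.le] at hx
    simp only [gammaPDFReal, if_pos hx.1]
    rw [Real.mul_rpow hm.le hx.1, Real.rpow_sub_one hm.ne']
    field_simp
  rw [h2, intervalIntegral.integral_const_mul,
    intervalIntegral.integral_comp_mul_left (fun t => t ^ (m - 1) * Real.exp (-t)) hm.ne']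
  simp only [lowerIncGamma, mul_zero, smul_eq_mul]
  field_simp

lemma exp_map_aux (l k : ℝ) (hl : 0 < l) (hk : 0 < k) (f : ℝ → ENNReal) (hf : Measurable f) :
    ∫⁻ u, f u ∂(Measure.map (fun x : ℝ => Real.exp (-(k * x))) (expMeasure l)) =
      ∫⁻ u in Ioc (0:ℝ) 1, f u * ENNReal.ofReal ((l / k) * u ^ (l / k - 1)) := by
  have himg : (fun x : ℝ => Real.exp (-(k * x))) '' Ici 0 = Ioc 0 1 := by
    ext u
    constructor
    · rintro ⟨x, hx, rfl⟩
      refine ⟨Real.exp_pos _, Real.exp_le_one_iff.mpr ?_⟩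
      have := mul_nonneg hk.le hx
      linarith
    · rintro ⟨h0, h1⟩
      refine ⟨-Real.log u / k, ?_, ?_⟩
      · have := Real.log_nonpos h0.le h1
        exact div_nonneg (by linarith) hk.le
      · simp only
        rw [mul_div_cancel₀ _ hk.ne', neg_neg, Real.exp_log h0]
  have hmeas : Measurable (fun x : ℝ => Real.exp (-(k * x))) := by fun_prop
  rw [lintegral_map hf hmeas, expMeasure, gammaMeasure,
    lintegral_withDensity_eq_lintegral_mul _
      (by unfold gammaPDF; exact (measurable_gammaPDFReal 1 l).ennreal_ofReal) (g := fun x => f (Real.exp (-(k * x)))) (hf.comp hmeas),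
    ← himg, lintegral_image_eq_lintegral_abs_deriv_mul
      (f := fun x : ℝ => Real.exp (-(k * x)))
      (f' := fun x => Real.exp (-(k * x)) * (-(k * 1))) measurableSet_Ici
      (fun x _ => (((hasDerivAt_id x).const_mul k).neg.exp).hasDerivWithinAt)]
  · rw [← lintegral_indicator measurableSet_Ici]
    apply lintegral_congr
    intro x
    by_cases hx : 0 ≤ x
    · rw [indicator_of_mem (by exact hx)]
      simp only [Pi.mul_apply, gammaPDF_of_nonneg hx]
      rw [mul_left_comm, mul_comm (ENNReal.ofReal _) (f _), ← ENNReal.ofReal_mul (abs_nonneg _)]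
      congr 2
      have e : Real.exp (-(k*x)) * Real.exp (-(k*x)) ^ (l/k - 1) = Real.exp (-(l*x)) := by
        rw [← Real.exp_mul, ← Real.exp_add]
        congr 1
        field_simp
        ring
      rw [abs_mul, abs_of_pos (Real.exp_pos _), mul_one, abs_neg, abs_of_pos hk]
      simp only [rpow_one, Gamma_one, div_one, sub_self, rpow_zero, mul_one]
      rw [← e]
      field_simp
    · rw [indicator_of_notMem (by exact hx)]
      simp [gammaPDF_of_neg (not_le.mp hx)]
  · intro x _ y _ h
    have := Real.exp_injective h
    have := neg_injective this
    exact mul_left_cancel₀ hk.ne' this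

/-- Eq. (25) of the paper: if `hₐ` is unit-mean Gamma with shape `m` and rate `m`, and
`h_p = exp(-k·R)` with `R` exponential of rate `l`, independent of `hₐ`, then with
`q = l/k` the outage probability `Pr[hₐ · h_p < ν]` equals
`q ∫₀¹ [γ(m, mν/u)/Γ(m)] u^(q-1) du`. -/
theorem outage_probability_integral_form (m l k ν : ℝ) (hm : 0 < m) (hl : 0 < l)
    (hk : 0 < k) (hν : 0 < ν) :
    ((gammaMeasure m m).prod
        (Measure.map (fun x : ℝ => Real.exp (-(k * x))) (expMeasure l)))
        {p : ℝ × ℝ | p.1 * p.2 < ν} =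
      ENNReal.ofReal ((l / k) *
        ∫ u in Ioc (0:ℝ) 1,
          (lowerIncGamma m (m * ν / u) / Real.Gamma m) * u ^ (l / k - 1)) := by
  have := isProbabilityMeasure_gammaMeasure hm hm
  have := isProbabilityMeasure_expMeasure hl
  have hmeas : Measurable (fun x : ℝ => Real.exp (-(k * x))) := by fun_prop
  have := Measure.isProbabilityMeasure_map (μ := expMeasure l) hmeas.aemeasurable
  have hS : MeasurableSet {p : ℝ × ℝ | p.1 * p.2 < ν} :=
    measurableSet_lt (by fun_prop) (by fun_prop)
  have hF := measurable_measure_prodMk_right (μ := gammaMeasure m m) hS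
  have key := Measure.prod_apply_symm (μ := gammaMeasure m m)
    (ν := Measure.map (fun x : ℝ => Real.exp (-(k * x))) (expMeasure l)) hS
  rw [exp_map_aux l k hl hk _ hF] at key
  have hne := measure_ne_top ((gammaMeasure m m).prod
        (Measure.map (fun x : ℝ => Real.exp (-(k * x))) (expMeasure l)))
        {p : ℝ × ℝ | p.1 * p.2 < ν}
  rw [← ENNReal.ofReal_toReal hne]
  congr 1
  rw [key] at hne ⊢
  have hG : Measurable (fun u : ℝ => gammaMeasure m m ((fun x => (x, u)) ⁻¹'
      {p : ℝ × ℝ | p.1 * p.2 < ν}) * ENNReal.ofReal ((l / k) * u ^ (l / k - 1))) :=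
    hF.mul (by fun_prop)
  rw [← integral_toReal hG.aemeasurable (ae_lt_top hG hne), ← integral_const_mul]
  apply setIntegral_congr_fun measurableSet_Ioc
  intro u hu
  have hu0 : 0 < u := hu.1
  have hpre : ((fun x => (x, u)) ⁻¹' {p : ℝ × ℝ | p.1 * p.2 < ν}) = Iio (ν / u) := by
    ext x
    simp [lt_div_iff₀ hu0]
  have hpos : 0 ≤ lowerIncGamma m (m * (ν / u)) / Real.Gamma m := by
    refine div_nonneg ?_ (Real.Gamma_pos_of_pos hm).le
    apply intervalIntegral.integral_nonneg (by positivity)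
    intro t ht
    have := ht.1
    positivity
  simp only
  rw [hpre, gamma_Iio_aux m _ hm (by positivity), ENNReal.toReal_mul,
    ENNReal.toReal_ofReal hpos, ENNReal.toReal_ofReal (by positivity), mul_div_assoc]
  ring
end
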